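/- arXiv:0705.0758 — 7 statements merged into one kernel-verified Lean document; each statement's English description precedes it below -/
import Mathlib

section
/- Let g be an invertible symmetric 3×3 real matrix with inverse g⁻¹, and let R : Fin 3 → Fin 3 → Fin 3 → Fin 3 → ℝ satisfy the Riemann symmetries: R a b c d = -R b a c d = -R a b d c = R c d a b for all indices, and the first Bianchi identity R a b c d + R a c d b + R a d b c = 0. Define the Ricci tensor Ric b d = Σ_{a,c} (g⁻¹) a c * R a b c d, the curvature scalar Λ = Σ_{b,d} (g⁻¹) b d * Ric b d, and the traceless Ricci tensor S a b = Ric a b - (1/3) * Λ * g a b. Then for all indices a, b, c, d: R a b c d = g a c * S b d - g a d * S b c + g b d * S a c - g b c * S a d - (1/6) * (g a d * g b c - g a c * g b d) * Λ. (In three dimensions the Weyl tensor vanishes identically and the curvature is completely determined by the Ricci tensor and the curvature scalar.) -/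
/-- In dimension three, a tensor with two skew pairs of indices, one lower and one upper, is
determined by its contraction `ρ`. -/
theorem eq_of_skew_of_contraction_fin_three (P : Fin 3 → Fin 3 → Fin 3 → Fin 3 → ℝ)
    (hfst : ∀ a b c d, P a b c d = -P b a c d) (hsnd : ∀ a b c d, P a b c d = -P a b d c)
    (ρ : Matrix (Fin 3) (Fin 3) ℝ) (hρ : ∀ b d, ρ b d = ∑ a, P a b a d) (a b c d : Fin 3) :
    P a b c d =
      (if a = c then ρ b d else 0) - (if a = d then ρ b c else 0)
        + (if b = d then ρ a c else 0) - (if b = c then ρ a d else 0)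
        - (1 / 2) * ((if a = c ∧ b = d then 1 else 0) - (if a = d ∧ b = c then 1 else 0))
          * ρ.trace := by
  have hfst0 : ∀ a c d, P a a c d = 0 := fun a c d => by linarith [hfst a a c d]
  have hsnd0 : ∀ a b c, P a b c c = 0 := fun a b c => by linarith [hsnd a b c c]
  have h10 := hfst 1 0
  have h20 := hfst 2 0
  have h21 := hfst 2 1
  have k10 := fun a b => hsnd a b 1 0
  have k20 := fun a b => hsnd a b 2 0
  have k21 := fun a b => hsnd a b 2 1
  fin_cases a <;> fin_cases b <;> fin_cases c <;> fin_cases d <;>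
    simp [Matrix.trace, Fin.sum_univ_three, hρ, hfst0, hsnd0, h10, h20, h21, k10, k20, k21] <;>
    ring

open Finset in
/-- In three dimensions the Riemann curvature tensor is completely determined by
the traceless Ricci tensor and the curvature scalar. -/
theorem riemann_from_ricci_in_three_dimensions
    (g ginv : Matrix (Fin 3) (Fin 3) ℝ)
    (hgsymm : g.IsSymm)
    (hginv : g * ginv = 1) (hinvg : ginv * g = 1)
    (R : Fin 3 → Fin 3 → Fin 3 → Fin 3 → ℝ)
    (hskew1 : ∀ a b c d, R a b c d = -R b a c d)
    (hskew2 : ∀ a b c d, R a b c d = -R a b d c)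
    (hpair : ∀ a b c d, R a b c d = R c d a b)
    (hbianchi : ∀ a b c d, R a b c d + R a c d b + R a d b c = 0)
    (Ric : Fin 3 → Fin 3 → ℝ)
    (hRic : ∀ b d, Ric b d = ∑ a : Fin 3, ∑ c : Fin 3, ginv a c * R a b c d)
    (Λ : ℝ)
    (hΛ : Λ = ∑ b : Fin 3, ∑ d : Fin 3, ginv b d * Ric b d)
    (S : Fin 3 → Fin 3 → ℝ)
    (hS : ∀ a b, S a b = Ric a b - (1 / 3) * Λ * g a b) :
    ∀ a b c d,
      R a b c d =
        g a c * S b d - g a d * S b c + g b d * S a c - g b c * S a d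
          - (1 / 6) * (g a d * g b c - g a c * g b d) * Λ := by
  have hsymm : ∀ i j, g i j = g j i := fun i j => hgsymm.apply j i
  -- the curvature and Ricci tensors with their last indices raised
  let P : Fin 3 → Fin 3 → Fin 3 → Fin 3 → ℝ := fun a b c d =>
    (ginv * Matrix.of (R a b) * ginv.transpose) c d
  let ρ : Matrix (Fin 3) (Fin 3) ℝ := Matrix.of Ric * ginv.transpose
  have hfst : ∀ a b c d, P a b c d = -P b a c d := fun a b c d => by
    have : Matrix.of (R a b) = -Matrix.of (R b a) := by ext i j; exact hskew1 a b i j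
    simp only [P, this, Matrix.mul_neg, Matrix.neg_mul, Matrix.neg_apply]
  have hsnd : ∀ a b c d, P a b c d = -P a b d c := fun a b c d => by
    have : (Matrix.of (R a b)).transpose = -Matrix.of (R a b) := by
      ext i j; exact hskew2 a b j i
    have hP : (ginv * Matrix.of (R a b) * ginv.transpose).transpose
        = -(ginv * Matrix.of (R a b) * ginv.transpose) := by
      simp only [Matrix.transpose_mul, Matrix.transpose_transpose, this, Matrix.mul_assoc,
        Matrix.mul_neg, Matrix.neg_mul]
    exact congrFun (congrFun hP d) c
  have hρ : ∀ b d, ρ b d = ∑ a, P a b a d := fun b d => by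
    simp only [ρ, P, Matrix.mul_apply, Matrix.of_apply, Matrix.transpose_apply, hRic, sum_mul]
    exact sum_comm
  have htrace : ρ.trace = Λ := by
    simp only [hΛ, ρ, Matrix.trace, Matrix.diag_apply, Matrix.mul_apply, Matrix.of_apply,
      Matrix.transpose_apply, mul_comm]
  have hlowρ : ρ * g.transpose = Matrix.of Ric := by
    rw [Matrix.mul_assoc, ← Matrix.transpose_mul, hginv, Matrix.transpose_one, Matrix.mul_one]
  have hlowρ' : ∀ b d, ∑ f, ρ b f * g d f = Ric b d := fun b d => congrFun (congrFun hlowρ b) d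
  intro a b c d
  have hlow : R a b c d = ∑ e, ∑ f, g c e * P a b e f * g d f := by
    have : Matrix.of (R a b)
        = g * (ginv * Matrix.of (R a b) * ginv.transpose) * g.transpose := by
      rw [Matrix.mul_assoc, Matrix.mul_assoc, Matrix.mul_assoc, ← Matrix.transpose_mul, hginv,
        ← Matrix.mul_assoc, hginv]
      simp
    have h := congrFun (congrFun this c) d
    rw [Matrix.of_apply, Matrix.mul_apply] at h
    rw [h, sum_comm]
    exact sum_congr rfl fun f _ => by rw [Matrix.mul_apply, sum_mul, Matrix.transpose_apply]
  rw [hlow]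
  simp only [eq_of_skew_of_contraction_fin_three P hfst hsnd ρ hρ a b, htrace, hS,
    ← hlowρ']
  simp only [hsymm a, hsymm b]
  fin_cases a <;> fin_cases b <;> simp [Fin.sum_univ_three, -mul_eq_zero, -zero_eq_mul] <;> ring
end

section
/- Let V be a 3-dimensional real vector space with a symmetric bilinear form g, and let (k, n, m) be a null triad spanning V (g(k,n) = -1, g(m,m) = 1, g(k,k) = g(n,n) = g(k,m) = g(n,m) = 0). Let T be the Segre type [3] canonical form T(u,w) = α·g(u,w) + μ·(g(k,u)g(m,w) + g(m,u)g(k,w)) with μ ≠ 0. Then every eigenvector of T relative to g is a nonzero scalar multiple of the null vector k, and its eigenvalue is α. (The Segre type [3] tensor has exactly one eigendirection, which is null.) -/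
/-- The Segre type [3] canonical tensor has exactly one eigendirection, which is
the null direction `k`, with eigenvalue `α`. -/
theorem segre_type_three_unique_null_eigendirection
    {V : Type*} [AddCommGroup V] [Module ℝ V]
    (g : LinearMap.BilinForm ℝ V) (hgsymm : ∀ u w : V, g u w = g w u)
    (k n m : V)
    (hkn : g k n = -1) (hmm : g m m = 1)
    (hkk : g k k = 0) (hnn : g n n = 0) (hkm : g k m = 0) (hnm : g n m = 0)
    (hspan : Submodule.span ℝ {k, n, m} = ⊤)
    (α μ : ℝ) (hμ : μ ≠ 0)
    (T : LinearMap.BilinForm ℝ V)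
    (hT : ∀ u w : V,
      T u w = α * g u w + μ * (g k u * g m w + g m u * g k w)) :
    ∀ v : V, ∀ c : ℝ, v ≠ 0 → (∀ u : V, T v u = c * g v u) →
      (∃ s : ℝ, s ≠ 0 ∧ v = s • k) ∧ c = α := by
  intro v c hv hev
  have hmem : v ∈ Submodule.span ℝ {k, n, m} := hspan ▸ Submodule.mem_top
  obtain ⟨a, b, d, rfl⟩ := Submodule.mem_span_triple.mp hmem
  have hnk : g n k = -1 := by rw [hgsymm, hkn]
  have hmk : g m k = 0 := by rw [hgsymm, hkm]
  have hmn : g m n = 0 := by rw [hgsymm, hnm]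
  have ek := hev k
  have en := hev n
  have em := hev m
  simp only [hT, map_add, map_smul, LinearMap.add_apply, LinearMap.smul_apply, smul_eq_mul,
    hkn, hmm, hkk, hnn, hkm, hnm, hnk, hmk, hmn] at ek en em
  have hb : (α - c) * b = 0 := by linarith
  have hd : (α - c) * d = μ * b := by linarith
  have ha : (α - c) * a = -(μ * d) := by linarith
  have hc : α - c = 0 := by
    by_contra h
    obtain rfl : b = 0 := by simpa [h] using hb
    obtain rfl : d = 0 := by simpa [h] using hd
    obtain rfl : a = 0 := by simpa [h] using ha
    simp at hv
  obtain rfl : b = 0 := by simpa [hc, hμ] using hd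
  obtain rfl : d = 0 := by simpa [hc, hμ] using ha
  refine ⟨⟨a, ?_, by simp⟩, by linarith⟩
  rintro rfl
  simp at hv
end

section
/- Let V be a 3-dimensional real vector space with a symmetric bilinear form g, and let (k, n, m) be a null triad spanning V (g(k,n) = -1, g(m,m) = 1, g(k,k) = g(n,n) = g(k,m) = g(n,m) = 0). Let T be the Segre type [1zz̄] canonical form T(u,w) = -α·(g(k,u)g(n,w) + g(n,u)g(k,w)) - β·(g(k,u)g(k,w) - g(n,u)g(n,w)) + γ·g(m,u)g(m,w) with β ≠ 0. Then m is an eigenvector of T relative to g with eigenvalue γ, and every eigenvector of T relative to g is a nonzero scalar multiple of m. (For β ≠ 0 the pair of complex-conjugate eigenvalues α ± iβ admits no real eigenvectors, so the only real eigendirection is the spacelike vector m.) -/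
/-- The Segre type [1zz̄] canonical tensor (β ≠ 0) has exactly one real
eigendirection, the spacelike vector `m`, with eigenvalue `γ`. -/
theorem segre_type_1zzbar_unique_spacelike_eigendirection
    {V : Type*} [AddCommGroup V] [Module ℝ V]
    (g : LinearMap.BilinForm ℝ V) (hgsymm : ∀ u w : V, g u w = g w u)
    (k n m : V)
    (hkn : g k n = -1) (hmm : g m m = 1)
    (hkk : g k k = 0) (hnn : g n n = 0) (hkm : g k m = 0) (hnm : g n m = 0)
    (hspan : Submodule.span ℝ {k, n, m} = ⊤)
    (α β γ : ℝ) (hβ : β ≠ 0)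
    (T : LinearMap.BilinForm ℝ V)
    (hT : ∀ u w : V,
      T u w = -α * (g k u * g n w + g n u * g k w)
        - β * (g k u * g k w - g n u * g n w) + γ * (g m u * g m w)) :
    (∀ u : V, T m u = γ * g m u) ∧
    (∀ v : V, ∀ c : ℝ, v ≠ 0 → (∀ u : V, T v u = c * g v u) →
      ∃ s : ℝ, s ≠ 0 ∧ v = s • m) := by
  have hnk : g n k = -1 := by rw [hgsymm, hkn]
  have hmk : g m k = 0 := by rw [hgsymm, hkm]
  have hmn : g m n = 0 := by rw [hgsymm, hnm]
  refine ⟨fun u => by rw [hT, hkm, hnm, hmm]; ring, fun v c hv hTv => ?_⟩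
  obtain ⟨a, b, d, rfl⟩ :=
    Submodule.mem_span_triple.mp (hspan ▸ Submodule.mem_top : v ∈ Submodule.span ℝ {k, n, m})
  have hTk := hTv k
  have hTn := hTv n
  simp only [hT, map_add, map_smul, LinearMap.add_apply, LinearMap.smul_apply, smul_eq_mul,
    hkn, hmm, hkk, hnn, hkm, hnm, hnk, hmk, hmn] at hTk hTn
  have hsum : a * a + b * b = 0 :=
    mul_left_cancel₀ hβ (by linear_combination a * hTk - b * hTn)
  obtain ⟨rfl, rfl⟩ := mul_self_add_mul_self_eq_zero.mp hsum
  refine ⟨d, ?_, by simp⟩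
  rintro rfl
  simp at hv
end

section
/- Let V be a 3-dimensional real vector space with a symmetric bilinear form g, and let (k, n, m) be a null triad spanning V (g(k,n) = -1, g(m,m) = 1, g(k,k) = g(n,n) = g(k,m) = g(n,m) = 0). Let T be the Segre type [12] canonical form T(u,w) = -α·(g(k,u)g(n,w) + g(n,u)g(k,w)) + λ·g(k,u)g(k,w) + γ·g(m,u)g(m,w) with λ ≠ 0. Then: (a) k is an eigenvector of T relative to g with eigenvalue α; (b) m is an eigenvector of T relative to g with eigenvalue γ; (c) if moreover α ≠ γ, then every eigenvector of T relative to g is a nonzero scalar multiple of k or of m; in particular T has no timelike eigenvector (no eigenvector v with g(v,v) < 0). -/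
/-- Eigenvectors of the Segre type [12] canonical tensor: the null vector `k`
(eigenvalue α) and the spacelike vector `m` (eigenvalue γ); when α ≠ γ these are
the only eigendirections, so in particular there is no timelike eigenvector. -/
theorem segre_type_12_eigenvectors
    {V : Type*} [AddCommGroup V] [Module ℝ V]
    (g : LinearMap.BilinForm ℝ V) (hgsymm : ∀ u w : V, g u w = g w u)
    (k n m : V)
    (hkn : g k n = -1) (hmm : g m m = 1)
    (hkk : g k k = 0) (hnn : g n n = 0) (hkm : g k m = 0) (hnm : g n m = 0)
    (hspan : Submodule.span ℝ {k, n, m} = ⊤)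
    (α lam γ : ℝ) (hlam : lam ≠ 0)
    (T : LinearMap.BilinForm ℝ V)
    (hT : ∀ u w : V,
      T u w = -α * (g k u * g n w + g n u * g k w)
        + lam * (g k u * g k w) + γ * (g m u * g m w)) :
    (∀ u : V, T k u = α * g k u) ∧
    (∀ u : V, T m u = γ * g m u) ∧
    (α ≠ γ →
      (∀ v : V, ∀ c : ℝ, v ≠ 0 → (∀ u : V, T v u = c * g v u) →
        (∃ s : ℝ, s ≠ 0 ∧ v = s • k) ∨ (∃ s : ℝ, s ≠ 0 ∧ v = s • m)) ∧
      ¬ ∃ v : V, ∃ c : ℝ, v ≠ 0 ∧ g v v < 0 ∧ ∀ u : V, T v u = c * g v u) := by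
  have hnk : g n k = -1 := by rw [hgsymm, hkn]
  have hmk : g m k = 0 := by rw [hgsymm, hkm]
  have hmn : g m n = 0 := by rw [hgsymm, hnm]
  have eigenvector_cases : α ≠ γ → ∀ v : V, ∀ c : ℝ, v ≠ 0 → (∀ u : V, T v u = c * g v u) →
      (∃ s : ℝ, s ≠ 0 ∧ v = s • k) ∨ (∃ s : ℝ, s ≠ 0 ∧ v = s • m) := by
    intro hαγ v c hv hev
    have hmem : v ∈ Submodule.span ℝ {k, n, m} := hspan ▸ Submodule.mem_top
    obtain ⟨x, y, z, rfl⟩ := Submodule.mem_span_triple.mp hmem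
    have hk := hev k
    have hn := hev n
    have hm := hev m
    rw [hT] at hk hn hm
    simp only [map_add, map_smul, LinearMap.add_apply, LinearMap.smul_apply, smul_eq_mul,
      hkn, hmm, hkk, hnn, hkm, hnm, hnk, hmk, hmn] at hk hn hm
    have hy : y = 0 := by
      by_contra hy
      have hc : c = α := mul_right_cancel₀ hy (by linarith)
      subst hc
      exact mul_ne_zero hlam hy (by linarith)
    subst hy
    by_cases hx : x = 0
    · subst hx
      refine Or.inr ⟨z, ?_, by simp⟩
      rintro rfl
      simp at hv
    · have hc : c = α := mul_right_cancel₀ hx (by linarith)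
      have hz : z = 0 := by
        by_contra hz
        exact hαγ (mul_right_cancel₀ hz (by rw [← hc]; linarith))
      exact Or.inl ⟨x, hx, by simp [hz]⟩
  refine ⟨fun u => ?_, fun u => ?_, fun hαγ => ⟨eigenvector_cases hαγ, ?_⟩⟩
  · rw [hT, hkk, hnk, hmk]
    ring
  · rw [hT, hkm, hnm, hmm]
    ring
  · rintro ⟨v, c, hv, hneg, hev⟩
    rcases eigenvector_cases hαγ v c hv hev with ⟨s, -, rfl⟩ | ⟨s, -, rfl⟩
    · simp [hkk] at hneg
    · simp only [map_smul, LinearMap.smul_apply, smul_eq_mul, hmm] at hneg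
      nlinarith [mul_self_nonneg s]
end

section
/- Let m > 0 and ω ∈ ℝ satisfy m² ≥ 4ω². Define D(r) = sinh(m·r)/m and H(r) = (4ω/m²)·(sinh(m·r/2))². Then for every r ∈ ℝ one has D(r)² - H(r)² ≥ 0. (For m² ≥ 4ω² the homogeneous Gödel-type spacetime has no closed timelike circles t, r = const: the metric coefficient g_φφ = D² - H² is everywhere nonnegative.) -/
/-- For `m² ≥ 4ω²` the homogeneous Gödel-type spacetime has no closed timelike
circles `t, r = const`: the metric coefficient `g_φφ = D² - H²` is everywhere
nonnegative. -/
theorem godel_type_causal_when_m_sq_ge_four_omega_sq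
    (m ω : ℝ) (hm : 0 < m) (h : m ^ 2 ≥ 4 * ω ^ 2) :
    ∀ r : ℝ,
      (Real.sinh (m * r) / m) ^ 2
        - ((4 * ω / m ^ 2) * (Real.sinh (m * r / 2)) ^ 2) ^ 2 ≥ 0 := by
  intro r
  have hsinh : Real.sinh (m * r) = 2 * Real.sinh (m * r / 2) * Real.cosh (m * r / 2) := by
    rw [← Real.sinh_two_mul]
    ring_nf
  have hfactor : (Real.sinh (m * r) / m) ^ 2
        - ((4 * ω / m ^ 2) * (Real.sinh (m * r / 2)) ^ 2) ^ 2
      = 4 * Real.sinh (m * r / 2) ^ 2 / m ^ 4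
        * (m ^ 2 + (m ^ 2 - 4 * ω ^ 2) * Real.sinh (m * r / 2) ^ 2) := by
    rw [hsinh, div_pow, mul_pow, Real.cosh_sq]
    field_simp
    ring
  have hdiff : 0 ≤ m ^ 2 - 4 * ω ^ 2 := sub_nonneg.mpr h
  rw [hfactor]
  positivity
end

section
/- Let m > 0 and ω ∈ ℝ satisfy 0 < m² < 4ω². Define D(r) = sinh(m·r)/m and H(r) = (4ω/m²)·(sinh(m·r/2))². Then there exists r > 0 such that D(r)² - H(r)² < 0. (For 0 < m² < 4ω², in particular for the Gödel spacetime where m² = 2ω², there is a non-causal region: the metric coefficient g_φφ = D² - H² becomes negative, producing closed timelike curves.) -/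
/-- Closed form of `g_φφ = D² - H²` for a Gödel-type metric, in terms of `sinh (m r / 2)`. -/
lemma godel_type_gphiphi_eq (m ω r : ℝ) (hm : m ≠ 0) :
    (Real.sinh (m * r) / m) ^ 2 - ((4 * ω / m ^ 2) * (Real.sinh (m * r / 2)) ^ 2) ^ 2
      = 4 * Real.sinh (m * r / 2) ^ 2 / m ^ 4
        * (m ^ 2 - (4 * ω ^ 2 - m ^ 2) * Real.sinh (m * r / 2) ^ 2) := by
  have hsinh : Real.sinh (m * r) ^ 2
      = 4 * Real.sinh (m * r / 2) ^ 2 * (1 + Real.sinh (m * r / 2) ^ 2) := by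
    have hdouble := Real.sinh_two_mul (m * r / 2)
    rw [mul_div_cancel₀ (m * r) (two_ne_zero' ℝ)] at hdouble
    rw [hdouble, mul_pow, Real.cosh_sq]
    ring
  rw [div_pow, hsinh]
  field_simp
  ring

/-- For `0 < m² < 4ω²` the homogeneous Gödel-type spacetime has a non-causal
region: the metric coefficient `g_φφ = D² - H²` becomes negative. -/
theorem godel_type_noncausal_region_when_m_sq_lt_four_omega_sq
    (m ω : ℝ) (hm : 0 < m) (h : m ^ 2 < 4 * ω ^ 2) :
    ∃ r : ℝ, 0 < r ∧
      (Real.sinh (m * r) / m) ^ 2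
        - ((4 * ω / m ^ 2) * (Real.sinh (m * r / 2)) ^ 2) ^ 2 < 0 := by
  have hδ : 0 < 4 * ω ^ 2 - m ^ 2 := sub_pos.mpr h
  obtain ⟨k, hk⟩ : ∃ k, k = m ^ 2 / (4 * ω ^ 2 - m ^ 2) + 1 := ⟨_, rfl⟩
  have hk1 : 1 < k := by rw [hk]; linarith [div_pos (pow_pos hm 2) hδ]
  have hk0 : 0 < k := one_pos.trans hk1
  have hkm : m ^ 2 < (4 * ω ^ 2 - m ^ 2) * k ^ 2 := by
    have hlt : m ^ 2 < (4 * ω ^ 2 - m ^ 2) * k := by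
      rw [hk, mul_add, mul_div_cancel₀ _ hδ.ne']
      linarith
    have hle : k ≤ k ^ 2 := by nlinarith
    exact hlt.trans_le (mul_le_mul_of_nonneg_left hle hδ.le)
  refine ⟨2 * Real.arsinh k / m, div_pos (mul_pos two_pos (Real.arsinh_pos_iff.mpr hk0)) hm, ?_⟩
  have harg : m * (2 * Real.arsinh k / m) / 2 = Real.arsinh k := by
    field_simp
  rw [godel_type_gphiphi_eq m ω _ hm.ne', harg, Real.sinh_arsinh]
  exact mul_neg_of_pos_of_neg (by positivity) (sub_neg.mpr hkm)
end

section
/- Let μ > 0 and ω ≠ 0. Define D(r) = sin(μ·r)/μ and H(r) = (2ω/μ²)·(1 - cos(μ·r)), and set f(r) = D(r)² - H(r)². Then for every R₀ ∈ ℝ there exist r₁ > R₀ and r₂ > R₀ such that f(r₁) > 0 and f(r₂) < 0. (For m² = -μ² < 0 the homogeneous Gödel-type spacetime exhibits an infinite sequence of alternating causal and non-causal regions.) -/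
/-- Every angle `x` is attained by `μ * r`, modulo `2π`, at arbitrarily large radii `r`. -/
lemma exists_gt_mul_eq_add_nat_mul_two_pi {μ : ℝ} (hμ : 0 < μ) (x R : ℝ) :
    ∃ r : ℝ, R < r ∧ ∃ n : ℕ, μ * r = x + n * (2 * Real.pi) := by
  obtain ⟨n, hn⟩ := exists_nat_gt ((μ * R - x) / (2 * Real.pi))
  rw [div_lt_iff₀ Real.two_pi_pos] at hn
  refine ⟨(x + n * (2 * Real.pi)) / μ, ?_, n, mul_div_cancel₀ _ hμ.ne'⟩
  rw [lt_div_iff₀ hμ]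
  linarith

/-- Factorization of `g_φφ = D² - H²` in terms of `cos (μ r)`. -/
lemma godel_type_gphiphi_eq_s16 {μ : ℝ} (hμ : μ ≠ 0) (ω x : ℝ) :
    (Real.sin x / μ) ^ 2 - ((2 * ω / μ ^ 2) * (1 - Real.cos x)) ^ 2 =
      (1 - Real.cos x) / μ ^ 4 *
        (μ ^ 2 * (1 + Real.cos x) - 4 * ω ^ 2 * (1 - Real.cos x)) := by
  rw [div_pow, Real.sin_sq]
  field_simp
  ring

/-- For `m² = -μ² < 0` the homogeneous Gödel-type spacetime exhibits an infinite
sequence of alternating causal and non-causal regions. -/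
theorem godel_type_alternating_causal_regions
    (μ ω : ℝ) (hμ : 0 < μ) (hω : ω ≠ 0)
    (f : ℝ → ℝ)
    (hf : ∀ r : ℝ, f r = (Real.sin (μ * r) / μ) ^ 2
      - ((2 * ω / μ ^ 2) * (1 - Real.cos (μ * r))) ^ 2) :
    ∀ R₀ : ℝ, (∃ r₁ : ℝ, R₀ < r₁ ∧ 0 < f r₁) ∧
      (∃ r₂ : ℝ, R₀ < r₂ ∧ f r₂ < 0) := by
  intro R₀
  have hω2 : 0 < ω ^ 2 := by positivity
  constructor
  · set c := 4 * ω ^ 2 / (μ ^ 2 + 4 * ω ^ 2) with hc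
    have hc0 : 0 < c := by positivity
    have hc1 : c < 1 := by
      rw [hc, div_lt_one (by positivity)]
      linarith [pow_pos hμ 2]
    have hceq : c * (μ ^ 2 + 4 * ω ^ 2) = 4 * ω ^ 2 :=
      div_mul_cancel₀ _ (by positivity)
    obtain ⟨r, hr, n, hn⟩ := exists_gt_mul_eq_add_nat_mul_two_pi hμ (Real.arccos c) R₀
    refine ⟨r, hr, ?_⟩
    have hcos : Real.cos (μ * r) = c := by
      rw [hn, Real.cos_add_nat_mul_two_pi, Real.cos_arccos (by linarith) hc1.le]
    rw [hf, godel_type_gphiphi_eq_s16 hμ.ne', hcos]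
    refine mul_pos (div_pos (sub_pos.2 hc1) (by positivity)) ?_
    nlinarith [pow_pos hμ 2]
  · obtain ⟨r, hr, n, hn⟩ := exists_gt_mul_eq_add_nat_mul_two_pi hμ Real.pi R₀
    refine ⟨r, hr, ?_⟩
    have hcos : Real.cos (μ * r) = -1 := by
      rw [hn, Real.cos_add_nat_mul_two_pi, Real.cos_pi]
    rw [hf, godel_type_gphiphi_eq_s16 hμ.ne', hcos]
    refine mul_neg_of_pos_of_neg (div_pos (by norm_num) (by positivity)) ?_
    linarith
end
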